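/- Let v : ℝ × ℝ × ℝ → ℝ be continuous, T-periodic in its first argument, and suppose there exist constants a, b ≥ 0 and δ > 0 with |v(t,x,y)| ≤ a + b·|y|^(2-δ) for all t, x, y. Suppose there exist C² functions x₁, x₂ : ℝ → ℝ, each T-periodic, with x₁(t) < x₂(t), x₁''(t) > v(t, x₁(t), x₁'(t)), and x₂''(t) < v(t, x₂(t), x₂'(t)) for all t. Then the equation x'' = v(t, x, x') has a T-periodic solution x with x₁(t) < x(t) < x₂(t) for all t. -/

import Mathlib

/-! Truncating `v` outside the strip between the barriers and for large slopes makes it bounded.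
At an extremum of `x - x₁` or `x - x₂` the strict barrier inequalities keep a periodic solution `x`
of the truncated equation inside the strip, and there Nagumo's estimate, that
`log (1 + x' ^ 2) - 2 * C * x` decreases while `x' > 0`, keeps the slopes below the truncation.

The bounded equation is solved by finite differences. Once the field is replaced by a Lipschitz
envelope, a damped Jacobi iteration is monotone, and its greatest fixed point between constant
barriers is periodic because its translates are fixed points too. The discrete solutions and their
difference quotients are equi-Lipschitz, so they converge along an ultrafilter of vanishing
steps. -/

open Filter Function Set Topology
open scoped NNReal

namespace NagumoBarrier

theorem exists_isGreatest_fixedPoints_Icc {α : Type*} [ConditionallyCompleteLattice α]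
    {f : α → α} {a b : α} (hab : a ≤ b) (hf : MonotoneOn f (Icc a b)) (ha : a ≤ f a)
    (hb : f b ≤ b) : ∃ x, IsGreatest (fixedPoints f ∩ Icc a b) x := by
  have : Fact (a ≤ b) := ⟨hab⟩
  have hmaps : MapsTo f (Icc a b) (Icc a b) := fun x hx ↦
    ⟨ha.trans (hf (left_mem_Icc.2 hab) hx hx.1), (hf hx (right_mem_Icc.2 hab) hx.2).trans hb⟩
  let F : Icc a b →o Icc a b := ⟨hmaps.restrict f _ _, fun x y hxy ↦ hf x.2 y.2 hxy⟩
  obtain ⟨hfix, hgreatest⟩ := F.isGreatest_gfp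
  exact ⟨F.gfp, ⟨congrArg Subtype.val hfix, F.gfp.2⟩,
    fun y hy ↦ hgreatest (a := ⟨y, hy.2⟩) (Subtype.ext hy.1)⟩

section DiscreteScheme

/-- `u` solves the centred finite difference scheme with step `h` for `x'' = g (t, x, x')`; the
value `u i` stands for `x (i * h)`. -/
def IsDiscreteSolution (h : ℝ) (g : ℝ × ℝ × ℝ → ℝ) (u : ℤ → ℝ) : Prop :=
  ∀ i, u (i + 1) + u (i - 1) - 2 * u i =
    h ^ 2 * g (i * h, u i, (u (i + 1) - u (i - 1)) / (2 * h))

/-- A damped Jacobi iteration whose fixed points are the discrete solutions. The damping `2 + h`,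
rather than `2`, makes it monotone as soon as `g` is `h⁻¹`-Lipschitz. -/
noncomputable def relaxation (h : ℝ) (g : ℝ × ℝ × ℝ → ℝ) (u : ℤ → ℝ) (i : ℤ) : ℝ :=
  u i + (u (i + 1) + u (i - 1) - 2 * u i -
    h ^ 2 * g (i * h, u i, (u (i + 1) - u (i - 1)) / (2 * h))) / (2 + h)

variable {h : ℝ} {g : ℝ × ℝ × ℝ → ℝ} {u : ℤ → ℝ}

theorem isDiscreteSolution_iff_mem_fixedPoints (hh : 0 < h) :
    IsDiscreteSolution h g u ↔ u ∈ fixedPoints (relaxation h g) := by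
  have h2 : 2 + h ≠ 0 := by positivity
  simp only [IsDiscreteSolution, mem_fixedPoints, IsFixedPt, funext_iff, relaxation, add_eq_left,
    div_eq_zero_iff, h2, or_false, sub_eq_zero]

theorem monotone_relaxation {K : ℝ≥0} (hh : 0 < h) (hg : LipschitzWith K g) (hK : K * h ≤ 1) :
    Monotone (relaxation h g) := by
  intro u w huw i
  have hc := sub_nonneg.2 (huw i)
  have hr := sub_nonneg.2 (huw (i + 1))
  have hl := sub_nonneg.2 (huw (i - 1))
  set gu := g (i * h, u i, (u (i + 1) - u (i - 1)) / (2 * h)) with hgu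
  set gw := g (i * h, w i, (w (i + 1) - w (i - 1)) / (2 * h)) with hgw
  set S := (w i - u i) + (w (i + 1) - u (i + 1) + (w (i - 1) - u (i - 1))) / (2 * h) with hS
  have hdist : dist ((i * h : ℝ), w i, (w (i + 1) - w (i - 1)) / (2 * h))
      (i * h, u i, (u (i + 1) - u (i - 1)) / (2 * h)) ≤ S := by
    have hquot : |(w (i + 1) - w (i - 1)) / (2 * h) - (u (i + 1) - u (i - 1)) / (2 * h)| ≤
        (w (i + 1) - u (i + 1) + (w (i - 1) - u (i - 1))) / (2 * h) := by
      rw [← sub_div, abs_div, abs_of_pos (show 0 < 2 * h by positivity)]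
      gcongr
      exact abs_le.2 ⟨by linarith, by linarith⟩
    have hquot0 := (abs_nonneg _).trans hquot
    simp only [Prod.dist_eq, Real.dist_eq, sub_self, abs_zero, abs_of_nonneg hc]
    exact max_le (add_nonneg hc hquot0) (max_le (by linarith) (hquot.trans (by linarith)))
  have hS0 : 0 ≤ S := dist_nonneg.trans hdist
  have hincr : h ^ 2 * (gw - gu) ≤
      h * (w i - u i) + (w (i + 1) - u (i + 1) + (w (i - 1) - u (i - 1))) / 2 :=
    calc h ^ 2 * (gw - gu) ≤ h ^ 2 * (K * S) := by
          gcongr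
          exact (le_abs_self _).trans (hg.dist_le_mul_of_le hdist)
      _ = (K * h) * (h * S) := by ring
      _ ≤ 1 * (h * S) := mul_le_mul_of_nonneg_right hK (mul_nonneg hh.le hS0)
      _ = _ := by rw [hS]; field_simp
  rw [← sub_nonneg]
  calc (0 : ℝ) ≤ ((w (i + 1) + w (i - 1) + h * w i - h ^ 2 * gw) -
        (u (i + 1) + u (i - 1) + h * u i - h ^ 2 * gu)) / (2 + h) :=
      div_nonneg (by linarith) (by positivity)
    _ = relaxation h g w i - relaxation h g u i := by
      rw [relaxation, relaxation, ← hgu, ← hgw]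
      field_simp
      ring

theorem IsDiscreteSolution.comp_add {k : ℤ} (hu : IsDiscreteSolution h g u)
    (hper : ∀ q, g (q.1 + k * h, q.2) = g q) : IsDiscreteSolution h g fun i ↦ u (i + k) := by
  intro i
  have := hu (i + k)
  rw [add_right_comm i k 1, add_sub_right_comm i k 1, Int.cast_add, add_mul] at this
  exact this.trans (congrArg _ (hper (i * h, _)))

theorem exists_isDiscreteSolution_periodic {K : ℝ≥0} {k : ℤ} {A B : ℝ} (hh : 0 < h)
    (hg : LipschitzWith K g) (hK : K * h ≤ 1) (hper : ∀ q, g (q.1 + k * h, q.2) = g q)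
    (hAB : A ≤ B) (hA : ∀ t, g (t, A, 0) ≤ 0) (hB : ∀ t, 0 ≤ g (t, B, 0)) :
    ∃ u : ℤ → ℝ, IsDiscreteSolution h g u ∧ Periodic u k ∧ ∀ i, u i ∈ Icc A B := by
  have h2 : 0 < 2 + h := by positivity
  have hlow : (fun _ ↦ A : ℤ → ℝ) ≤ relaxation h g fun _ ↦ A := fun i ↦ by
    have := mul_nonpos_of_nonneg_of_nonpos (sq_nonneg h) (hA (i * h))
    simp only [relaxation, sub_self, zero_div]
    exact le_add_of_nonneg_right (div_nonneg (by linarith) h2.le)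
  have hupp : relaxation h g (fun _ ↦ B) ≤ (fun _ ↦ B : ℤ → ℝ) := fun i ↦ by
    have := mul_nonneg (sq_nonneg h) (hB (i * h))
    simp only [relaxation, sub_self, zero_div]
    exact add_le_of_nonpos_right (div_nonpos_of_nonpos_of_nonneg (by linarith) h2.le)
  obtain ⟨u, ⟨hfix, hmem⟩, hgreatest⟩ := exists_isGreatest_fixedPoints_Icc
    (fun _ ↦ hAB) ((monotone_relaxation hh hg hK).monotoneOn _) hlow hupp
  have hu := (isDiscreteSolution_iff_mem_fixedPoints hh).2 hfix
  -- Translates of the greatest solution are again solutions, so they lie below it.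
  have hshift : ∀ k : ℤ, (∀ q, g (q.1 + k * h, q.2) = g q) → ∀ i, u (i + k) ≤ u i :=
    fun k hk ↦ hgreatest ⟨(isDiscreteSolution_iff_mem_fixedPoints hh).1 (hu.comp_add hk),
      fun i ↦ hmem.1 (i + k), fun i ↦ hmem.2 (i + k)⟩
  have hper' : ∀ q : ℝ × ℝ × ℝ, g (q.1 + (-k : ℤ) * h, q.2) = g q := fun q ↦ by
    simpa using (hper (q.1 + (-k : ℤ) * h, q.2)).symm
  refine ⟨u, hu, fun i ↦ (hshift k hper i).antisymm ?_, fun i ↦ ⟨hmem.1 i, hmem.2 i⟩⟩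
  simpa using hshift (-k) hper' (i + k)

theorem abs_sub_le_mul_of_abs_step_le {δ : ℝ} {i k : ℤ}
    (hu : ∀ j ∈ uIcc i k, |u (j + 1) - u j| ≤ δ) : |u k - u i| ≤ δ * |(k : ℝ) - i| := by
  wlog hik : i ≤ k generalizing i k
  · rw [abs_sub_comm, abs_sub_comm (k : ℝ)]
    exact this (uIcc_comm i k ▸ hu) (le_of_not_ge hik)
  rw [uIcc_of_le hik] at hu
  rw [abs_of_nonneg (sub_nonneg.2 (Int.cast_le.2 hik))]
  induction k, hik using Int.leInduction with
  | base => simp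
  | succ k hik ih =>
    have hprev := ih fun j hj ↦ hu j ⟨hj.1, hj.2.trans (by lia)⟩
    have hlast := hu k ⟨hik, by lia⟩
    have := abs_sub_le (u (k + 1)) (u k) (u i)
    push_cast
    linarith

theorem abs_sub_sub_mul_le_of_abs_slope_sub_le {w : ℤ → ℝ} {c ε : ℝ} {i k : ℤ} (hh : 0 < h)
    (hstep : ∀ j, u (j + 1) = u j + h * w j) (hw : ∀ j ∈ uIcc i k, |w j - c| ≤ ε) :
    |u k - u i - (k * h - i * h) * c| ≤ ε * |k * h - i * h| := by
  have hsum := abs_sub_le_mul_of_abs_step_le (u := fun j ↦ u j - j * h * c) (δ := h * ε)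
    (i := i) (k := k) fun j hj ↦ by
      have hj' : u (j + 1) - (j + 1 : ℤ) * h * c - (u j - j * h * c) = h * (w j - c) := by
        rw [hstep]
        push_cast
        ring
      rw [hj', abs_mul, abs_of_pos hh]
      exact mul_le_mul_of_nonneg_left (hw j hj) hh.le
  calc |u k - u i - (k * h - i * h) * c| = |u k - k * h * c - (u i - i * h * c)| := by
        congr 1
        ring
    _ ≤ h * ε * |(k : ℝ) - i| := hsum
    _ = ε * |k * h - i * h| := by
        rw [← sub_mul, abs_mul, abs_of_pos hh]
        ring

theorem abs_step_le_of_periodic {δ : ℝ} {n : ℕ} (hn : 0 < n) (hper : Periodic u n)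
    (hδ : ∀ i, |u (i + 1) + u (i - 1) - 2 * u i| ≤ δ) (i : ℤ) : |u (i + 1) - u i| ≤ n * δ := by
  have hn' : (0 : ℝ) < n := Nat.cast_pos.2 hn
  have hδ0 : 0 ≤ δ := (abs_nonneg _).trans (hδ i)
  have hstep : ∀ j, |u (j + 1 + 1) - u (j + 1) - (u (j + 1) - u j)| ≤ δ := fun j ↦ by
    have := hδ (j + 1)
    rw [add_sub_cancel_right] at this
    convert this using 2
    ring
  have hdiff : ∀ j ∈ uIcc i (i + n), |u (j + 1) - u j - (u (i + 1) - u i)| ≤ n * δ := by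
    intro j hj
    rw [uIcc_of_le (by lia)] at hj
    have hji : |(j : ℝ) - i| ≤ n := by
      rw [abs_of_nonneg (sub_nonneg.2 (Int.cast_le.2 hj.1)), sub_le_iff_le_add']
      exact_mod_cast hj.2
    calc _ ≤ δ * |(j : ℝ) - i| :=
          abs_sub_le_mul_of_abs_step_le (u := fun j ↦ u (j + 1) - u j) fun j _ ↦ hstep j
      _ ≤ n * δ := by rw [mul_comm]; gcongr
  -- After one period `u` returns to its value, so only the linear part contributes to the sum.
  have hsum := abs_sub_le_mul_of_abs_step_le (u := fun j ↦ u j - j * (u (i + 1) - u i))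
    (δ := n * δ) (i := i) (k := i + n) fun j hj ↦ by
      convert hdiff j hj using 2
      push_cast
      ring
  have hlin : u (i + n) - (i + n : ℤ) * (u (i + 1) - u i) - (u i - i * (u (i + 1) - u i)) =
      -(n * (u (i + 1) - u i)) := by
    rw [hper i]
    push_cast
    ring
  rw [hlin, abs_neg, abs_mul, Int.cast_add, Int.cast_natCast, add_sub_cancel_left,
    abs_of_pos hn', mul_comm] at hsum
  exact le_of_mul_le_mul_right hsum hn'

/-- The backward difference quotient, the discrete counterpart of the derivative. -/
noncomputable def diffQuot (h : ℝ) (u : ℤ → ℝ) (i : ℤ) : ℝ :=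
  (u i - u (i - 1)) / h

theorem add_mul_diffQuot_succ (hh : h ≠ 0) (i : ℤ) :
    u i + h * diffQuot h u (i + 1) = u (i + 1) := by
  rw [diffQuot, add_sub_cancel_right, mul_div_cancel₀ _ hh, add_sub_cancel]

theorem IsDiscreteSolution.diffQuot_succ (hu : IsDiscreteSolution h g u) (hh : h ≠ 0) (i : ℤ) :
    diffQuot h u (i + 1) = diffQuot h u i +
      h * g (i * h, u i, (diffQuot h u i + diffQuot h u (i + 1)) / 2) := by
  have hcentred : (diffQuot h u i + diffQuot h u (i + 1)) / 2 =
      (u (i + 1) - u (i - 1)) / (2 * h) := by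
    rw [diffQuot, diffQuot, add_sub_cancel_right]
    field_simp
    ring
  have hsecond : diffQuot h u (i + 1) - diffQuot h u i =
      (u (i + 1) + u (i - 1) - 2 * u i) / h := by
    rw [diffQuot, diffQuot, add_sub_cancel_right]
    ring
  rw [← sub_eq_iff_eq_add', hsecond, hu i, hcentred]
  field_simp

theorem IsDiscreteSolution.abs_diffQuot_le {M : ℝ} {n : ℕ} (hu : IsDiscreteSolution h g u)
    (hh : 0 < h) (hn : 0 < n) (hper : Periodic u n) (hM : ∀ q, |g q| ≤ M) (i : ℤ) :
    |diffQuot h u i| ≤ M * (n * h) := by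
  have hsecond : ∀ i, |u (i + 1) + u (i - 1) - 2 * u i| ≤ h ^ 2 * M := fun i ↦ by
    rw [hu i, abs_mul, abs_of_pos (pow_pos hh 2)]
    exact mul_le_mul_of_nonneg_left (hM _) (sq_nonneg h)
  have hstep := abs_step_le_of_periodic hn hper hsecond (i - 1)
  rw [sub_add_cancel] at hstep
  rw [diffQuot, abs_div, abs_of_pos hh, div_le_iff₀ hh]
  linarith

end DiscreteScheme

section LipschitzRegularization

variable {α : Type*} [PseudoMetricSpace α] {f : α → ℝ} {m c r : ℝ} {K : ℝ≥0}

/-- The Pasch–Hausdorff envelope of `f`. It is used for `f` bounded below, when it is the largest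
`K`-Lipschitz function below `f`; otherwise the infimum may take its junk value `0`. -/
noncomputable def lipschitzEnvelope (K : ℝ≥0) (f : α → ℝ) (x : α) : ℝ :=
  ⨅ y, f y + K * dist x y

theorem lipschitzEnvelope_le (hf : ∀ x, m ≤ f x) (x y : α) :
    lipschitzEnvelope K f x ≤ f y + K * dist x y := by
  refine ciInf_le ⟨m, ?_⟩ y
  rintro _ ⟨z, rfl⟩
  exact (hf z).trans (le_add_of_nonneg_right (by positivity))

theorem lipschitzEnvelope_le_self (hf : ∀ x, m ≤ f x) (x : α) : lipschitzEnvelope K f x ≤ f x := by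
  simpa using lipschitzEnvelope_le (K := K) hf x x

theorem le_lipschitzEnvelope {x : α} (h : ∀ y, c ≤ f y + K * dist x y) :
    c ≤ lipschitzEnvelope K f x :=
  have : Nonempty α := ⟨x⟩
  le_ciInf h

theorem le_lipschitzEnvelope_of_ball {x : α} (hnear : ∀ y, dist x y < r → c ≤ f y)
    (hfar : ∀ y, c ≤ f y + K * r) : c ≤ lipschitzEnvelope K f x := by
  refine le_lipschitzEnvelope fun y ↦ ?_
  rcases lt_or_ge (dist x y) r with hy | hy
  · exact (hnear y hy).trans (le_add_of_nonneg_right (by positivity))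
  · exact (hfar y).trans (by gcongr)

theorem abs_lipschitzEnvelope_le (hf : ∀ x, |f x| ≤ m) (x : α) : |lipschitzEnvelope K f x| ≤ m := by
  have hlow : ∀ x, -m ≤ f x := fun x ↦ (abs_le.1 (hf x)).1
  refine abs_le.2 ⟨le_lipschitzEnvelope fun y ↦ ?_,
    (lipschitzEnvelope_le_self hlow x).trans (abs_le.1 (hf x)).2⟩
  exact (hlow y).trans (le_add_of_nonneg_right (by positivity))

theorem lipschitzWith_lipschitzEnvelope (hf : ∀ x, m ≤ f x) :
    LipschitzWith K (lipschitzEnvelope K f) := by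
  refine LipschitzWith.of_le_add_mul K fun x y ↦ ?_
  rw [← sub_le_iff_le_add]
  refine le_lipschitzEnvelope fun z ↦ ?_
  calc lipschitzEnvelope K f x - K * dist x y ≤ f z + K * dist x z - K * dist x y := by
        gcongr
        exact lipschitzEnvelope_le hf x z
    _ ≤ f z + K * (dist x y + dist y z) - K * dist x y := by gcongr; exact dist_triangle x y z
    _ = f z + K * dist y z := by ring

theorem lipschitzEnvelope_comp_isometryEquiv (e : α ≃ᵢ α) (hf : ∀ x, f (e x) = f x) (x : α) :
    lipschitzEnvelope K f (e x) = lipschitzEnvelope K f x :=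
  (e.surjective.iInf_congr e fun y ↦ by rw [hf, e.dist_eq]).symm

theorem tendsto_lipschitzEnvelope {ι : Type*} {l : Filter ι} {K : ι → ℝ≥0}
    (hK : Tendsto K l atTop) (hf : ∀ x, m ≤ f x) {x : α} (hfx : ContinuousAt f x) :
    Tendsto (uncurry fun n ↦ lipschitzEnvelope (K n) f) (l ×ˢ 𝓝 x) (𝓝 (f x)) := by
  have hfsnd : Tendsto (fun q : ι × α ↦ f q.2) (l ×ˢ 𝓝 x) (𝓝 (f x)) :=
    hfx.tendsto.comp tendsto_snd
  refine tendsto_order.2 ⟨fun c hc ↦ ?_, fun c hc ↦ ?_⟩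
  · obtain ⟨c', hcc', hc'⟩ := exists_between hc
    obtain ⟨r, hr, hball⟩ := Metric.eventually_nhds_iff.1 (hfx.eventually_const_le hc')
    have hlarge : ∀ᶠ n in l, c' ≤ m + K n * (r / 2) :=
      (tendsto_atTop_add_const_left l m
        ((NNReal.tendsto_coe_atTop.2 hK).atTop_mul_const (half_pos hr))).eventually_ge_atTop c'
    filter_upwards [hlarge.prod_mk (Metric.ball_mem_nhds x (half_pos hr))] with ⟨n, y⟩ ⟨hn, hy⟩
    refine hcc'.trans_le (le_lipschitzEnvelope_of_ball (r := r / 2) (fun z hz ↦ hball ?_)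
      fun z ↦ hn.trans (by gcongr; exact hf z))
    have := dist_triangle_left z x y
    have : dist y x < r / 2 := hy
    linarith
  · filter_upwards [hfsnd.eventually_lt_const hc] with q hq
    exact (lipschitzEnvelope_le_self hf q.2).trans_lt hq

end LipschitzRegularization

section GridLimit

variable {ι : Type*} {l : Filter ι} {h : ι → ℝ} {s c : ℝ}

/-- Along this filter the step `h n` follows `l` and the grid point `i * h n` tends to `s`. Grid
functions `u n : ℤ → ℝ` that tend to `c` along it are said to converge continuously at `s`. -/
def gridNhds (l : Filter ι) (h : ι → ℝ) (s : ℝ) : Filter (ι × ℤ) :=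
  comap (fun q ↦ (q.1, q.2 * h q.1)) (l ×ˢ 𝓝 s)

theorem tendsto_gridNhds_iff {β : Type*} {k : Filter β} {f : β → ι × ℤ} :
    Tendsto f k (gridNhds l h s) ↔
      Tendsto (fun b ↦ (f b).1) k l ∧ Tendsto (fun b ↦ (f b).2 * h (f b).1) k (𝓝 s) := by
  rw [gridNhds, tendsto_comap_iff, tendsto_prod_iff']
  rfl

theorem tendsto_fst_gridNhds : Tendsto Prod.fst (gridNhds l h s) l :=
  (tendsto_gridNhds_iff.1 tendsto_id).1

theorem tendsto_gridPoint : Tendsto (fun q : ι × ℤ ↦ q.2 * h q.1) (gridNhds l h s) (𝓝 s) :=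
  (tendsto_gridNhds_iff.1 tendsto_id).2

theorem tendsto_shift_gridNhds {k : ι → ℤ} (hk : Tendsto (fun n ↦ k n * h n) l (𝓝 c)) :
    Tendsto (fun q : ι × ℤ ↦ (q.1, q.2 + k q.1)) (gridNhds l h s) (gridNhds l h (s + c)) := by
  refine tendsto_gridNhds_iff.2 ⟨tendsto_fst_gridNhds, ?_⟩
  simpa only [Int.cast_add, add_mul, comp_def] using
    tendsto_gridPoint.add (hk.comp tendsto_fst_gridNhds)

theorem tendsto_floor_gridNhds (hh : ∀ n, 0 < h n) (hlim : Tendsto h l (𝓝 0)) (s : ℝ) :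
    Tendsto (fun n ↦ (n, ⌊s / h n⌋)) l (gridNhds l h s) := by
  refine tendsto_gridNhds_iff.2 ⟨tendsto_id, ?_⟩
  have hlower : Tendsto (fun n ↦ s - h n) l (𝓝 s) := by simpa using hlim.const_sub s
  refine tendsto_of_tendsto_of_tendsto_of_le_of_le hlower tendsto_const_nhds (fun n ↦ ?_) fun n ↦ ?_
  · have := (div_lt_iff₀ (hh n)).1 (Int.lt_floor_add_one (s / h n))
    linarith
  · exact (le_div_iff₀ (hh n)).1 (Int.floor_le _)

theorem gridNhds_neBot [l.NeBot] (hh : ∀ n, 0 < h n) (hlim : Tendsto h l (𝓝 0)) (s : ℝ) :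
    (gridNhds l h s).NeBot :=
  (tendsto_floor_gridNhds hh hlim s).neBot

theorem exists_tendsto_of_abs_le (U : Ultrafilter ι) {f : ι → ℝ} {R : ℝ} (hf : ∀ n, |f n| ≤ R) :
    ∃ x, Tendsto f U (𝓝 x) := by
  obtain ⟨x, -, hx⟩ := isCompact_Icc.ultrafilter_le_nhds (U.map f)
    (tendsto_principal.2 (Eventually.of_forall fun n ↦ abs_le.1 (hf n)))
  exact ⟨x, hx⟩

theorem exists_tendsto_gridNhds {U : Ultrafilter ι} {u : ι → ℤ → ℝ} {D R : ℝ}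
    (hh : ∀ n, 0 < h n) (hlim : Tendsto h U (𝓝 0)) (hR : ∀ n i, |u n i| ≤ R)
    (hD : ∀ n i, |u n (i + 1) - u n i| ≤ D * h n) :
    ∃ x : ℝ → ℝ, ∀ s, Tendsto (uncurry u) (gridNhds U h s) (𝓝 (x s)) := by
  choose x hx using fun s ↦ exists_tendsto_of_abs_le U (f := fun n ↦ u n ⌊s / h n⌋) fun n ↦ hR n _
  refine ⟨x, fun s ↦ ((hx s).comp tendsto_fst_gridNhds).congr_dist ?_⟩
  have hfloor : Tendsto (fun n ↦ ⌊s / h n⌋ * h n) U (𝓝 s) :=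
    (tendsto_gridNhds_iff.1 (tendsto_floor_gridNhds hh hlim s)).2
  have hpoint : Tendsto (fun q : ι × ℤ ↦ q.2 * h q.1) (gridNhds U h s) (𝓝 s) := tendsto_gridPoint
  have hgap : Tendsto (fun q : ι × ℤ ↦ D * |q.2 * h q.1 - ⌊s / h q.1⌋ * h q.1|)
      (gridNhds U h s) (𝓝 0) := by
    simpa only [sub_self, abs_zero, mul_zero, comp_def] using
      (hpoint.sub (hfloor.comp tendsto_fst_gridNhds)).abs.const_mul D
  refine squeeze_zero (fun _ ↦ dist_nonneg) (fun ⟨n, i⟩ ↦ ?_) hgap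
  calc dist (u n ⌊s / h n⌋) (u n i) = |u n i - u n ⌊s / h n⌋| := by
        rw [dist_comm, Real.dist_eq]
    _ ≤ D * h n * |(i : ℝ) - ⌊s / h n⌋| := abs_sub_le_mul_of_abs_step_le fun j _ ↦ hD n j
    _ = D * |i * h n - ⌊s / h n⌋ * h n| := by
      rw [← sub_mul, abs_mul, abs_of_pos (hh n)]
      ring

theorem hasDerivAt_of_tendsto_gridNhds [l.NeBot] {u w : ι → ℤ → ℝ} {x : ℝ → ℝ}
    (hh : ∀ n, 0 < h n) (hlim : Tendsto h l (𝓝 0))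
    (hstep : ∀ n i, u n (i + 1) = u n i + h n * w n i)
    (hu : ∀ s, Tendsto (uncurry u) (gridNhds l h s) (𝓝 (x s)))
    (hw : Tendsto (uncurry w) (gridNhds l h s) (𝓝 c)) : HasDerivAt x c s := by
  rw [hasDerivAt_iff_isLittleO, Asymptotics.isLittleO_iff]
  intro ε hε
  have hclose : ∀ᶠ q in l ×ˢ 𝓝 s, ∀ i : ℤ, i * h q.1 = q.2 → |w q.1 i - c| ≤ ε := by
    have := hw.eventually (Metric.closedBall_mem_nhds c hε)
    rw [gridNhds, eventually_comap] at this
    filter_upwards [this] with q hq i hi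
    exact hq (q.1, i) (Prod.ext rfl hi)
  obtain ⟨P, hP, Q, hQ, hPQ⟩ := eventually_prod_iff.1 hclose
  obtain ⟨r, hr, hball⟩ := Metric.eventually_nhds_iff_ball.1 hQ
  filter_upwards [Metric.ball_mem_nhds s hr] with t ht
  have hfloor := fun t ↦ tendsto_floor_gridNhds hh hlim t
  have hpoint := fun t ↦ (tendsto_gridNhds_iff.1 (hfloor t)).2
  have hdiff := ((hpoint t).sub (hpoint s))
  refine le_of_tendsto_of_tendsto
    (((hu t).comp (hfloor t)).sub ((hu s).comp (hfloor s)) |>.sub (hdiff.smul_const c)).norm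
    (hdiff.norm.const_mul ε) ?_
  filter_upwards [hP, (hpoint t).eventually (Metric.isOpen_ball.mem_nhds ht),
    (hpoint s).eventually (Metric.ball_mem_nhds s hr)] with n hn hnt hns
  have hbetween : ∀ j ∈ uIcc ⌊s / h n⌋ ⌊t / h n⌋, |w n j - c| ≤ ε := fun j hj ↦ by
    have hmono : Monotone fun j : ℤ ↦ (j : ℝ) * h n :=
      fun a b hab ↦ mul_le_mul_of_nonneg_right (Int.cast_le.2 hab) (hh n).le
    exact hPQ hn (hball _ ((convex_ball s r).ordConnected.uIcc_subset hns hnt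
      (hmono.mapsTo_uIcc hj))) j rfl
  exact abs_sub_sub_mul_le_of_abs_slope_sub_le (hh n) (hstep n) hbetween

end GridLimit

section PeriodicSolution

/-- `x` is a `T`-periodic classical solution of `x'' = F (t, x, x')`. -/
structure IsPeriodicSolution (T : ℝ) (F : ℝ × ℝ × ℝ → ℝ) (x : ℝ → ℝ) : Prop where
  contDiff : ContDiff ℝ 2 x
  periodic : Periodic x T
  deriv_deriv : ∀ t, deriv (deriv x) t = F (t, x t, deriv x t)

variable {F : ℝ × ℝ × ℝ → ℝ} {T M : ℝ}

theorem isPeriodicSolution_of_hasDerivAt {x p : ℝ → ℝ} (hF : Continuous F) (hper : Periodic x T)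
    (hx : ∀ t, HasDerivAt x (p t) t) (hp : ∀ t, HasDerivAt p (F (t, x t, p t)) t) :
    IsPeriodicSolution T F x := by
  have hdx : deriv x = p := funext fun t ↦ (hx t).deriv
  have hdp : deriv p = fun t ↦ F (t, x t, p t) := funext fun t ↦ (hp t).deriv
  have hx' : Differentiable ℝ x := fun t ↦ (hx t).differentiableAt
  have hp' : Differentiable ℝ p := fun t ↦ (hp t).differentiableAt
  have hcont : Continuous fun t ↦ F (t, x t, p t) :=
    hF.comp (continuous_id.prodMk (hx'.continuous.prodMk hp'.continuous))
  refine ⟨?_, hper, fun t ↦ by rw [hdx, hdp]⟩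
  rw [← one_add_one_eq_two, contDiff_succ_iff_deriv, hdx, contDiff_one_iff_deriv, hdp]
  exact ⟨hx', by simp, hp', hcont⟩

variable {ι : Type*} {h : ι → ℝ} {u : ι → ℤ → ℝ}

theorem periodic_of_tendsto_gridNhds {l : Filter ι} [l.NeBot] {x : ℝ → ℝ} {k : ι → ℤ}
    (hh : ∀ n, 0 < h n) (hlim : Tendsto h l (𝓝 0)) (hk : ∀ n, k n * h n = T)
    (hper : ∀ n, Periodic (u n) (k n))
    (hu : ∀ s, Tendsto (uncurry u) (gridNhds l h s) (𝓝 (x s))) : Periodic x T := by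
  intro s
  have := gridNhds_neBot hh hlim s
  have hshift : Tendsto (fun q : ι × ℤ ↦ u q.1 (q.2 + k q.1)) (gridNhds l h s) (𝓝 (x (s + T))) :=
    (hu (s + T)).comp (tendsto_shift_gridNhds (tendsto_const_nhds.congr fun n ↦ (hk n).symm))
  exact tendsto_nhds_unique (hshift.congr fun q : ι × ℤ ↦ hper q.1 q.2) (hu s)

theorem exists_hasDerivAt_of_discrete_system {U : Ultrafilter ι} {d : ι → ℤ → ℝ}
    {g : ι → ℝ × ℝ × ℝ → ℝ} {D R : ℝ} (hh : ∀ n, 0 < h n) (hlim : Tendsto h U (𝓝 0))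
    (hM : ∀ n q, |g n q| ≤ M) (hg : ∀ q, Tendsto (uncurry g) (U ×ˢ 𝓝 q) (𝓝 (F q)))
    (hu : ∀ n i, u n (i + 1) = u n i + h n * d n (i + 1))
    (hd : ∀ n i, d n (i + 1) = d n i +
      h n * g n (i * h n, u n i, (d n i + d n (i + 1)) / 2))
    (hR : ∀ n i, |u n i| ≤ R) (hD : ∀ n i, |d n i| ≤ D) :
    ∃ x p : ℝ → ℝ, (∀ s, Tendsto (uncurry u) (gridNhds U h s) (𝓝 (x s))) ∧
      (∀ s, HasDerivAt x (p s) s) ∧ ∀ s, HasDerivAt p (F (s, x s, p s)) s := by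
  obtain ⟨x, hx⟩ := exists_tendsto_gridNhds hh hlim hR (D := D) fun n i ↦ by
    rw [hu, add_sub_cancel_left, abs_mul, abs_of_pos (hh n), mul_comm]
    exact mul_le_mul_of_nonneg_right (hD n _) (hh n).le
  obtain ⟨p, hp⟩ := exists_tendsto_gridNhds hh hlim hD (D := M) fun n i ↦ by
    rw [hd, add_sub_cancel_left, abs_mul, abs_of_pos (hh n), mul_comm]
    exact mul_le_mul_of_nonneg_right (hM n _) (hh n).le
  have hsucc : ∀ s, Tendsto (fun q : ι × ℤ ↦ (q.1, q.2 + 1)) (gridNhds U h s) (gridNhds U h s) :=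
    fun s ↦ by
      simpa only [add_zero] using tendsto_shift_gridNhds (s := s) (c := 0) (k := fun _ ↦ 1)
        (by simpa only [Int.cast_one, one_mul] using hlim)
  have hpsucc : ∀ s, Tendsto (fun q : ι × ℤ ↦ d q.1 (q.2 + 1)) (gridNhds U h s) (𝓝 (p s)) :=
    fun s ↦ (hp s).comp (hsucc s)
  have hmean : ∀ s, Tendsto (fun q : ι × ℤ ↦ (d q.1 q.2 + d q.1 (q.2 + 1)) / 2)
      (gridNhds U h s) (𝓝 (p s)) := fun s ↦ by
    simpa only [add_self_div_two, uncurry] using Tendsto.div_const ((hp s).add (hpsucc s)) 2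
  have hforce : ∀ s, Tendsto
      (fun q : ι × ℤ ↦ g q.1 (q.2 * h q.1, u q.1 q.2, (d q.1 q.2 + d q.1 (q.2 + 1)) / 2))
      (gridNhds U h s) (𝓝 (F (s, x s, p s))) := fun s ↦
    (hg _).comp (tendsto_fst_gridNhds.prodMk
      (tendsto_gridPoint.prodMk_nhds ((hx s).prodMk_nhds (hmean s))))
  exact ⟨x, p, hx, fun s ↦ hasDerivAt_of_tendsto_gridNhds hh hlim hu hx (hpsucc s),
    fun s ↦ hasDerivAt_of_tendsto_gridNhds hh hlim hd hp (hforce s)⟩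

theorem exists_isPeriodicSolution_of_isDiscreteSolution {U : Ultrafilter ι} {m : ι → ℕ}
    {g : ι → ℝ × ℝ × ℝ → ℝ} {R : ℝ} (hT : 0 < T) (hF : Continuous F) (hh : ∀ n, 0 < h n)
    (hlim : Tendsto h U (𝓝 0)) (hm : ∀ n, m n * h n = T) (hM : ∀ n q, |g n q| ≤ M)
    (hg : ∀ q, Tendsto (uncurry g) (U ×ˢ 𝓝 q) (𝓝 (F q)))
    (hu : ∀ n, IsDiscreteSolution (h n) (g n) (u n)) (hper : ∀ n, Periodic (u n) (m n))
    (hR : ∀ n i, |u n i| ≤ R) : ∃ x, IsPeriodicSolution T F x := by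
  have hm0 : ∀ n, 0 < m n := fun n ↦
    Nat.cast_pos.1 (pos_of_mul_pos_left ((hm n).symm ▸ hT) (hh n).le)
  have hd : ∀ n i, |diffQuot (h n) (u n) i| ≤ M * T := fun n i ↦
    hm n ▸ (hu n).abs_diffQuot_le (hh n) (hm0 n) (hper n) (hM n) i
  obtain ⟨x, p, hlimit, hx, hp⟩ := exists_hasDerivAt_of_discrete_system hh hlim hM hg
    (fun n i ↦ (add_mul_diffQuot_succ (hh n).ne' i).symm)
    (fun n ↦ (hu n).diffQuot_succ (hh n).ne') hR hd
  exact ⟨x, isPeriodicSolution_of_hasDerivAt hF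
    (periodic_of_tendsto_gridNhds hh hlim (k := fun n ↦ m n) (mod_cast hm) hper hlimit) hx hp⟩

theorem exists_isDiscreteSolution_lipschitzEnvelope {K : ℝ≥0} {h A B : ℝ} {n : ℕ} (hh : 0 < h)
    (hn : n * h = T) (hKh : K * h ≤ 1) (hKT : 1 ≤ K * T) (hper : ∀ q, F (q.1 + T, q.2) = F q)
    (hM : ∀ q, |F q| ≤ M) (hAB : A ≤ B) (hA : ∀ t, F (t, A, 0) ≤ 0)
    (hB : ∀ t x y, B ≤ x → 0 ≤ F (t, x, y)) :
    ∃ u, IsDiscreteSolution h (lipschitzEnvelope K F) u ∧ Periodic u n ∧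
      ∀ i, u i ∈ Icc A (B + M * T) := by
  have hlow : ∀ q, -M ≤ F q := fun q ↦ (abs_le.1 (hM q)).1
  have hM0 : 0 ≤ M := (abs_nonneg _).trans (hM 0)
  have hMT : 0 ≤ M * T := mul_nonneg hM0 (hn ▸ by positivity)
  -- The envelope lies below `F`, so `A` stays a lower barrier but the upper one moves up.
  have hupper : ∀ t, 0 ≤ lipschitzEnvelope K F (t, B + M * T, 0) := fun t ↦ by
    refine le_lipschitzEnvelope_of_ball (r := M * T) (fun ⟨t', x, y⟩ hdist ↦ hB t' x y ?_)
      fun q ↦ ?_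
    · have hx : |B + M * T - x| < M * T := (max_lt_iff.1 (max_lt_iff.1 hdist).2).1
      linarith [(abs_lt.1 hx).2]
    · linarith [hlow q, mul_le_mul_of_nonneg_left hKT hM0]
  have hshift : ∀ q, lipschitzEnvelope K F (q.1 + (n : ℤ) * h, q.2) = lipschitzEnvelope K F q := by
    rw [Int.cast_natCast, hn]
    let e : ℝ × ℝ × ℝ ≃ᵢ ℝ × ℝ × ℝ := IsometryEquiv.addRight (T, 0, 0)
    have he : ∀ q, e q = (q.1 + T, q.2) := fun q ↦ by simp [e, Prod.ext_iff]
    exact fun q ↦ he q ▸ lipschitzEnvelope_comp_isometryEquiv e (fun q ↦ he q ▸ hper q) q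
  exact exists_isDiscreteSolution_periodic hh (lipschitzWith_lipschitzEnvelope hlow) hKh hshift
    (by linarith) (fun t ↦ (lipschitzEnvelope_le_self hlow _).trans (hA t)) hupper

theorem exists_isPeriodicSolution_of_bounded {A B : ℝ} (hT : 0 < T) (hF : Continuous F)
    (hper : ∀ q, F (q.1 + T, q.2) = F q) (hM : ∀ q, |F q| ≤ M) (hAB : A ≤ B)
    (hA : ∀ t, F (t, A, 0) ≤ 0) (hB : ∀ t x y, B ≤ x → 0 ≤ F (t, x, y)) :
    ∃ x, IsPeriodicSolution T F x := by
  let h : ℕ → ℝ := fun n ↦ T / (n + 1 : ℕ)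
  let K : ℕ → ℝ≥0 := fun n ↦ (n + 1 : ℕ) * T.toNNReal⁻¹
  have hh : ∀ n, 0 < h n := fun n ↦ by positivity
  have hm : ∀ n, (n + 1 : ℕ) * h n = T := fun n ↦ mul_div_cancel₀ _ (by positivity)
  have hKT : ∀ n, K n * T = (n + 1 : ℕ) := fun n ↦ by
    simp [K, hT.le, hT.ne']
  have hKh : ∀ n, K n * h n = 1 := fun n ↦ by
    rw [mul_div_assoc', hKT, div_self (by positivity)]
  choose u hu huper hbox using fun n ↦ exists_isDiscreteSolution_lipschitzEnvelope (hh n) (hm n)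
    (hKh n).le (hKT n ▸ by simp) hper hM hAB hA hB
  have hhlim : Tendsto h atTop (𝓝 0) :=
    (tendsto_const_div_atTop_nhds_zero_nat T).comp (tendsto_add_atTop_nat 1)
  have hKlim : Tendsto K atTop atTop :=
    (tendsto_natCast_atTop_atTop.comp (tendsto_add_atTop_nat 1)).atTop_mul_const (by simpa)
  have hlow : ∀ q, -M ≤ F q := fun q ↦ (abs_le.1 (hM q)).1
  have hU := Ultrafilter.of_le (atTop : Filter ℕ)
  exact exists_isPeriodicSolution_of_isDiscreteSolution hT hF hh (hhlim.mono_left hU) hm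
    (fun n ↦ abs_lipschitzEnvelope_le hM)
    (fun q ↦ tendsto_lipschitzEnvelope (hKlim.mono_left hU) hlow hF.continuousAt) hu huper
    fun n i ↦ abs_le_max_abs_abs (hbox n i).1 (hbox n i).2

end PeriodicSolution

section PeriodicBounds

variable {f g : ℝ → ℝ} {T : ℝ}

theorem periodic_deriv (hf : Periodic f T) : Periodic (deriv f) T := fun t ↦ by
  rw [← deriv_comp_add_const, funext hf]

theorem exists_abs_le_of_periodic (hT : T ≠ 0) (hf : Continuous f) (hper : Periodic f T) :
    ∃ D, ∀ t, |f t| ≤ D :=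
  let ⟨D, hD⟩ := isBounded_iff_forall_norm_le.1 (hper.isBounded_of_continuous hT hf)
  ⟨D, fun t ↦ hD _ (mem_range_self t)⟩

theorem deriv_deriv_nonpos_of_isLocalMax {t : ℝ} (hf : ContinuousAt f t) (hmax : IsLocalMax f t) :
    deriv (deriv f) t ≤ 0 := by
  by_contra! hpos
  have hmin := isLocalMin_of_deriv_deriv_pos hpos hmax.deriv_eq_zero hf
  have hconst : f =ᶠ[𝓝 t] fun _ ↦ f t := by
    filter_upwards [hmax, hmin] with s hle hge using hle.antisymm hge
  rw [hconst.deriv.deriv_eq, deriv_const', deriv_const] at hpos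
  exact hpos.false

theorem lt_of_deriv_deriv_lt_of_le (hT : T ≠ 0) (hf : ContDiff ℝ 2 f) (hg : ContDiff ℝ 2 g)
    (hfper : Periodic f T) (hgper : Periodic g T)
    (hlt : ∀ t, g t ≤ f t → deriv f t = deriv g t → deriv (deriv g) t < deriv (deriv f) t) (t : ℝ) :
    f t < g t := by
  have hf' := hf.differentiable two_ne_zero
  have hg' := hg.differentiable two_ne_zero
  have hdiff : deriv (f - g) = deriv f - deriv g := funext fun s ↦ deriv_sub (hf' s) (hg' s)
  have hdiff2 : deriv (deriv (f - g)) = deriv (deriv f) - deriv (deriv g) := by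
    rw [hdiff]
    exact funext fun s ↦ deriv_sub ((hf.differentiable_deriv_two) s) (hg.differentiable_deriv_two s)
  obtain ⟨_, ⟨s, rfl⟩, hs⟩ := ((hfper.sub hgper).compact_of_continuous hT
    (hf.continuous.sub hg.continuous)).exists_isGreatest (range_nonempty _)
  have hmax : IsLocalMax (f - g) s := Eventually.of_forall fun r ↦ hs (mem_range_self r)
  have hd := hmax.deriv_eq_zero
  have hdd := deriv_deriv_nonpos_of_isLocalMax (hf'.sub hg').continuous.continuousAt hmax
  rw [hdiff, Pi.sub_apply, sub_eq_zero] at hd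
  rw [hdiff2, Pi.sub_apply, sub_nonpos] at hdd
  have hneg : (f - g) s < 0 := sub_neg.2 (not_le.1 fun hle ↦ (hlt s hle hd).not_ge hdd)
  exact sub_neg.1 ((hs (mem_range_self t)).trans_lt hneg)

theorem exists_last_zero {s t : ℝ} (hf : Continuous f) (hst : s ≤ t) (hs : f s = 0)
    (ht : 0 < f t) : ∃ r ∈ Ico s t, f r = 0 ∧ ∀ τ ∈ Ioc r t, 0 < f τ := by
  obtain ⟨r, ⟨⟨hsr, hrt⟩, hr⟩, hlast⟩ :=
    (isCompact_Icc.inter_right (isClosed_singleton.preimage hf)).exists_isGreatest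
      ⟨s, left_mem_Icc.2 hst, hs⟩
  have hr0 : f r = 0 := hr
  refine ⟨r, ⟨hsr, hrt.lt_of_ne ?_⟩, hr0, fun τ hτ ↦ not_le.1 fun hτ0 ↦ ?_⟩
  · rintro rfl
    exact ht.ne' hr0
  · obtain ⟨σ, hσ, hσ0⟩ := intermediate_value_Icc hτ.2 hf.continuousOn ⟨hτ0, ht.le⟩
    exact ((hlast ⟨⟨hsr.trans (hτ.1.le.trans hσ.1), hσ.2⟩, hσ0⟩).trans_lt hτ.1).not_ge hσ.1

variable {x : ℝ → ℝ} {C m₁ m₂ : ℝ}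

theorem antitoneOn_log_one_add_deriv_sq_sub {s t : ℝ} (hx : ContDiff ℝ 2 x)
    (hC : ∀ t, |deriv (deriv x) t| ≤ C * (1 + deriv x t ^ 2))
    (hpos : ∀ τ ∈ Ioc s t, 0 < deriv x τ) :
    AntitoneOn (fun τ ↦ Real.log (1 + deriv x τ ^ 2) - 2 * C * x τ) (Icc s t) := by
  have hderiv : ∀ τ, HasDerivAt (fun τ ↦ Real.log (1 + deriv x τ ^ 2) - 2 * C * x τ)
      (2 * deriv x τ * deriv (deriv x) τ / (1 + deriv x τ ^ 2) - 2 * C * deriv x τ) τ := fun τ ↦ by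
    have hx' := (hx.differentiable two_ne_zero τ).hasDerivAt
    have hx'' := (hx.differentiable_deriv_two τ).hasDerivAt
    have hsq : HasDerivAt (fun τ ↦ 1 + deriv x τ ^ 2) (2 * deriv x τ * deriv (deriv x) τ) τ := by
      simpa using (hx''.fun_pow 2).const_add 1
    exact (hsq.log (by positivity)).fun_sub (hx'.const_mul (2 * C))
  refine antitoneOn_of_deriv_nonpos (convex_Icc s t)
    (fun τ _ ↦ (hderiv τ).continuousAt.continuousWithinAt)
    (fun τ _ ↦ (hderiv τ).differentiableAt.differentiableWithinAt) fun τ hτ ↦ ?_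
  rw [interior_Icc] at hτ
  rw [(hderiv τ).deriv, sub_nonpos, div_le_iff₀ (by positivity)]
  calc 2 * deriv x τ * deriv (deriv x) τ ≤ 2 * deriv x τ * (C * (1 + deriv x τ ^ 2)) :=
      mul_le_mul_of_nonneg_left ((le_abs_self _).trans (hC τ))
        (mul_nonneg two_pos.le (hpos τ (Ioo_subset_Ioc_self hτ)).le)
    _ = 2 * C * deriv x τ * (1 + deriv x τ ^ 2) := by ring

theorem deriv_le_exp_of_periodic (hT : 0 < T) (hx : ContDiff ℝ 2 x) (hper : Periodic x T)
    (hmem : ∀ t, x t ∈ Icc m₁ m₂)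
    (hC : ∀ t, |deriv (deriv x) t| ≤ C * (1 + deriv x t ^ 2)) (t : ℝ) :
    deriv x t ≤ Real.exp (C * (m₂ - m₁)) := by
  rcases le_or_gt (deriv x t) 0 with ht | ht
  · exact ht.trans (Real.exp_pos _).le
  obtain ⟨s, hs, hs0⟩ := exists_deriv_eq_zero (sub_lt_self t hT) hx.continuous.continuousOn
    (hper.sub_eq t)
  obtain ⟨r, hr, hr0, hpos⟩ := exists_last_zero (hx.continuous_deriv one_le_two) hs.2.le hs0 ht
  have hC0 : 0 ≤ C := nonneg_of_mul_nonneg_left ((abs_nonneg _).trans (hC t)) (by positivity)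
  have hanti : Real.log (1 + deriv x t ^ 2) - 2 * C * x t ≤ -(2 * C * x r) := by
    simpa [hr0] using antitoneOn_log_one_add_deriv_sq_sub hx hC hpos (left_mem_Icc.2 hr.2.le)
      (right_mem_Icc.2 hr.2.le) hr.2.le
  have hosc : C * (x t - x r) ≤ C * (m₂ - m₁) :=
    mul_le_mul_of_nonneg_left (sub_le_sub (hmem t).2 (hmem r).1) hC0
  have hlog : Real.log (1 + deriv x t ^ 2) ≤ 2 * (C * (m₂ - m₁)) := by linarith
  refine le_of_sq_le_sq ?_ (Real.exp_pos _).le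
  calc deriv x t ^ 2 ≤ 1 + deriv x t ^ 2 := le_add_of_nonneg_left zero_le_one
    _ ≤ Real.exp (2 * (C * (m₂ - m₁))) := (Real.log_le_iff_le_exp (by positivity)).1 hlog
    _ = Real.exp (C * (m₂ - m₁)) ^ 2 := by rw [← Real.exp_nat_mul, Nat.cast_ofNat]

theorem abs_deriv_le_exp_of_periodic (hT : 0 < T) (hx : ContDiff ℝ 2 x) (hper : Periodic x T)
    (hmem : ∀ t, x t ∈ Icc m₁ m₂)
    (hC : ∀ t, |deriv (deriv x) t| ≤ C * (1 + deriv x t ^ 2)) (t : ℝ) :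
    |deriv x t| ≤ Real.exp (C * (m₂ - m₁)) := by
  have hneg : deriv (-x) = -deriv x := funext fun t ↦ deriv.neg
  have hneg2 : deriv (deriv (-x)) = -deriv (deriv x) := by
    rw [hneg]
    exact funext fun t ↦ deriv.neg
  have hminus := deriv_le_exp_of_periodic hT (x := -x) hx.neg
    (fun t ↦ congrArg Neg.neg (hper t)) (m₁ := -m₂) (m₂ := -m₁) (C := C)
    (fun t ↦ ⟨neg_le_neg (hmem t).2, neg_le_neg (hmem t).1⟩)
    (fun t ↦ by simpa [hneg, hneg2] using hC t) t
  rw [hneg, neg_sub_neg] at hminus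
  exact abs_le'.2 ⟨deriv_le_exp_of_periodic hT hx hper hmem hC t, hminus⟩

end PeriodicBounds

section Truncation

/-- The point of `[a, b]` closest to `x`, for `a ≤ b`. -/
noncomputable def clamp (a b x : ℝ) : ℝ := max a (min b x)

theorem clamp_mem_Icc {a b : ℝ} (hab : a ≤ b) (x : ℝ) : clamp a b x ∈ Icc a b :=
  ⟨le_max_left _ _, max_le hab (min_le_left _ _)⟩

theorem clamp_of_mem_Icc {a b x : ℝ} (hx : x ∈ Icc a b) : clamp a b x = x := by
  rw [clamp, min_eq_right hx.2, max_eq_right hx.1]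

theorem clamp_of_le {a b x : ℝ} (hab : a ≤ b) (hx : x ≤ a) : clamp a b x = a := by
  rw [clamp, min_eq_right (hx.trans hab), max_eq_left hx]

theorem clamp_of_ge {a b x : ℝ} (hab : a ≤ b) (hx : b ≤ x) : clamp a b x = b := by
  rw [clamp, min_eq_left hx, max_eq_right hab]

theorem abs_clamp_neg_le {K : ℝ} (hK : 0 ≤ K) (y : ℝ) : |clamp (-K) K y| ≤ K :=
  abs_le.2 (clamp_mem_Icc (neg_le_self hK) y)

theorem abs_clamp_neg_le_abs {K : ℝ} (hK : 0 ≤ K) (y : ℝ) : |clamp (-K) K y| ≤ |y| :=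
  abs_le.2 ⟨(le_min ((neg_nonpos.2 (abs_nonneg y)).trans hK) (neg_abs_le y)).trans
    (le_max_right _ _), max_le ((neg_nonpos.2 hK).trans (abs_nonneg y))
      ((min_le_right _ _).trans (le_abs_self y))⟩

variable {f : ℝ × ℝ × ℝ → ℝ} {x₁ x₂ : ℝ → ℝ} {C D K M T t x y : ℝ}

/-- `f` modified outside the strip `x₁ t ≤ x ≤ x₂ t` and for slopes above `K`, so that it becomes
bounded. The second summand pushes solutions back towards the strip. -/
noncomputable def truncatedField (f : ℝ × ℝ × ℝ → ℝ) (x₁ x₂ : ℝ → ℝ) (K M : ℝ)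
    (q : ℝ × ℝ × ℝ) : ℝ :=
  f (q.1, clamp (x₁ q.1) (x₂ q.1) q.2.1, clamp (-K) K q.2.2) +
    clamp (-M) M (q.2.1 - clamp (x₁ q.1) (x₂ q.1) q.2.1)

theorem continuous_truncatedField (hf : Continuous f) (hx₁ : Continuous x₁) (hx₂ : Continuous x₂) :
    Continuous (truncatedField f x₁ x₂ K M) := by
  unfold truncatedField clamp
  fun_prop

theorem truncatedField_add_period (hf : ∀ q, f (q.1 + T, q.2) = f q) (hx₁ : Periodic x₁ T)
    (hx₂ : Periodic x₂ T) (q : ℝ × ℝ × ℝ) :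
    truncatedField f x₁ x₂ K M (q.1 + T, q.2) = truncatedField f x₁ x₂ K M q := by
  have hf' : ∀ t z, f (t + T, z) = f (t, z) := fun t z ↦ hf (t, z)
  simp only [truncatedField, hx₁ q.1, hx₂ q.1, hf']

theorem truncatedField_of_mem (hM : 0 ≤ M) (hx : x ∈ Icc (x₁ t) (x₂ t)) :
    truncatedField f x₁ x₂ K M (t, x, y) = f (t, x, clamp (-K) K y) := by
  simp only [truncatedField, clamp_of_mem_Icc hx, sub_self]
  rw [clamp_of_mem_Icc ⟨neg_nonpos.2 hM, hM⟩, add_zero]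

theorem truncatedField_le_of_le_lower (hle : x₁ t ≤ x₂ t) (hM : 0 ≤ M) (hx : x ≤ x₁ t)
    (hy : |y| ≤ K) : truncatedField f x₁ x₂ K M (t, x, y) ≤ f (t, x₁ t, y) := by
  simp only [truncatedField, clamp_of_le hle hx, clamp_of_mem_Icc (abs_le.1 hy)]
  exact add_le_of_nonpos_right
    (max_le (neg_nonpos.2 hM) ((min_le_right _ _).trans (sub_nonpos.2 hx)))

theorem le_truncatedField_of_upper_le (hle : x₁ t ≤ x₂ t) (hM : 0 ≤ M) (hx : x₂ t ≤ x)
    (hy : |y| ≤ K) : f (t, x₂ t, y) ≤ truncatedField f x₁ x₂ K M (t, x, y) := by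
  simp only [truncatedField, clamp_of_ge hle hx, clamp_of_mem_Icc (abs_le.1 hy)]
  exact le_add_of_nonneg_right ((le_min hM (sub_nonneg.2 hx)).trans (le_max_right _ _))

theorem exists_isPeriodicSolution_truncatedField (hT : 0 < T) (hf : Continuous f)
    (hper : ∀ q, f (q.1 + T, q.2) = f q) (hx₁ : Continuous x₁) (hx₂ : Continuous x₂)
    (hx₁per : Periodic x₁ T) (hx₂per : Periodic x₂ T) (hle : ∀ t, x₁ t ≤ x₂ t) (hK : 0 ≤ K)
    (hM : ∀ t x y, x ∈ Icc (x₁ t) (x₂ t) → |y| ≤ K → |f (t, x, y)| ≤ M) :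
    ∃ x, IsPeriodicSolution T (truncatedField f x₁ x₂ K M) x := by
  have hfM : ∀ t x y, |f (t, clamp (x₁ t) (x₂ t) x, clamp (-K) K y)| ≤ M := fun t x y ↦
    hM t _ _ (clamp_mem_Icc (hle t) x) (abs_clamp_neg_le hK y)
  have hM0 : 0 ≤ M := (abs_nonneg _).trans (hfM 0 0 0)
  obtain ⟨A, hA⟩ := exists_abs_le_of_periodic hT.ne' hx₁ hx₁per
  obtain ⟨B, hB⟩ := exists_abs_le_of_periodic hT.ne' hx₂ hx₂per
  refine exists_isPeriodicSolution_of_bounded (A := -A - M) (B := B + M) (M := M + M) hT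
    (continuous_truncatedField hf hx₁ hx₂) (truncatedField_add_period hper hx₁per hx₂per)
    (fun q ↦ (abs_add_le _ _).trans (add_le_add (hfM _ _ _) (abs_clamp_neg_le hM0 _))) ?_
    (fun t ↦ ?_) fun t x y hx ↦ ?_
  · linarith [(abs_le.1 (hA 0)).1, (abs_le.1 (hB 0)).2, hle 0]
  · have hx : -A - M ≤ x₁ t := by linarith [(abs_le.1 (hA t)).1]
    have hpush : clamp (-M) M (-A - M - x₁ t) = -M :=
      clamp_of_le (neg_le_self hM0) (by linarith [(abs_le.1 (hA t)).1])
    have hfield := (abs_le.1 (hfM t (-A - M) 0)).2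
    rw [clamp_of_le (hle t) hx] at hfield
    simp only [truncatedField, clamp_of_le (hle t) hx, hpush]
    linarith
  · have hx' : x₂ t ≤ x := by linarith [(abs_le.1 (hB t)).2]
    have hpush : clamp (-M) M (x - x₂ t) = M :=
      clamp_of_ge (neg_le_self hM0) (by linarith [(abs_le.1 (hB t)).2])
    have hfield := (abs_le.1 (hfM t x y)).1
    rw [clamp_of_ge (hle t) hx'] at hfield
    simp only [truncatedField, clamp_of_ge (hle t) hx', hpush]
    linarith

/-- A `T`-periodic strict subsolution of `x'' = f (t, x, x')`. -/
structure IsStrictLowerBarrier (T : ℝ) (f : ℝ × ℝ × ℝ → ℝ) (x₁ : ℝ → ℝ) : Prop where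
  contDiff : ContDiff ℝ 2 x₁
  periodic : Periodic x₁ T
  lt_deriv_deriv : ∀ t, f (t, x₁ t, deriv x₁ t) < deriv (deriv x₁) t

/-- A `T`-periodic strict supersolution of `x'' = f (t, x, x')`. -/
structure IsStrictUpperBarrier (T : ℝ) (f : ℝ × ℝ × ℝ → ℝ) (x₂ : ℝ → ℝ) : Prop where
  contDiff : ContDiff ℝ 2 x₂
  periodic : Periodic x₂ T
  deriv_deriv_lt : ∀ t, deriv (deriv x₂) t < f (t, x₂ t, deriv x₂ t)

theorem IsStrictLowerBarrier.lt_of_isPeriodicSolution {x : ℝ → ℝ}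
    (hx₁ : IsStrictLowerBarrier T f x₁) (hT : T ≠ 0) (hle : ∀ t, x₁ t ≤ x₂ t)
    (hK : ∀ t, |deriv x₁ t| ≤ K) (hM : 0 ≤ M)
    (hx : IsPeriodicSolution T (truncatedField f x₁ x₂ K M) x) (t : ℝ) : x₁ t < x t := by
  refine lt_of_deriv_deriv_lt_of_le hT hx₁.contDiff hx.contDiff hx₁.periodic hx.periodic
    (fun s hs hd ↦ ?_) t
  calc deriv (deriv x) s = truncatedField f x₁ x₂ K M (s, x s, deriv x₁ s) := by
        rw [hx.deriv_deriv, hd]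
    _ ≤ f (s, x₁ s, deriv x₁ s) := truncatedField_le_of_le_lower (hle s) hM hs (hK s)
    _ < deriv (deriv x₁) s := hx₁.lt_deriv_deriv s

theorem IsStrictUpperBarrier.gt_of_isPeriodicSolution {x : ℝ → ℝ}
    (hx₂ : IsStrictUpperBarrier T f x₂) (hT : T ≠ 0) (hle : ∀ t, x₁ t ≤ x₂ t)
    (hK : ∀ t, |deriv x₂ t| ≤ K) (hM : 0 ≤ M)
    (hx : IsPeriodicSolution T (truncatedField f x₁ x₂ K M) x) (t : ℝ) : x t < x₂ t := by
  refine lt_of_deriv_deriv_lt_of_le hT hx.contDiff hx₂.contDiff hx.periodic hx₂.periodic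
    (fun s hs hd ↦ ?_) t
  calc deriv (deriv x₂) s < f (s, x₂ s, deriv x₂ s) := hx₂.deriv_deriv_lt s
    _ ≤ truncatedField f x₁ x₂ K M (s, x s, deriv x₂ s) :=
        le_truncatedField_of_upper_le (hle s) hM hs (hK s)
    _ = deriv (deriv x) s := by rw [hx.deriv_deriv, hd]

theorem IsPeriodicSolution.of_truncatedField {x : ℝ → ℝ} {m₁ m₂ : ℝ} (hT : 0 < T) (hK : 0 ≤ K)
    (hC : ∀ t x y, x ∈ Icc (x₁ t) (x₂ t) → |f (t, x, y)| ≤ C * (1 + y ^ 2))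
    (hKC : Real.exp (C * (m₂ - m₁)) ≤ K) (hM : 0 ≤ M)
    (hx : IsPeriodicSolution T (truncatedField f x₁ x₂ K M) x)
    (hstrip : ∀ t, x t ∈ Icc (x₁ t) (x₂ t)) (hm : ∀ t, x t ∈ Icc m₁ m₂) :
    IsPeriodicSolution T f x := by
  have heq : ∀ t, deriv (deriv x) t = f (t, x t, clamp (-K) K (deriv x t)) := fun t ↦ by
    rw [hx.deriv_deriv, truncatedField_of_mem hM (hstrip t)]
  have hC0 : 0 ≤ C := nonneg_of_mul_nonneg_left
    ((abs_nonneg _).trans (hC 0 (x 0) 0 (hstrip 0))) (by positivity)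
  have hquad : ∀ t, |deriv (deriv x) t| ≤ C * (1 + deriv x t ^ 2) := fun t ↦ by
    rw [heq]
    exact (hC t _ _ (hstrip t)).trans (by gcongr 2; exact sq_le_sq.2 (abs_clamp_neg_le_abs hK _))
  refine ⟨hx.contDiff, hx.periodic, fun t ↦ ?_⟩
  have hslope := (abs_deriv_le_exp_of_periodic hT hx.contDiff hx.periodic hm hquad t).trans hKC
  rw [heq, clamp_of_mem_Icc (abs_le.1 hslope)]

end Truncation

section Growth

variable {f : ℝ × ℝ × ℝ → ℝ} {T : ℝ}

theorem exists_abs_le_on_strip_of_periodic (hT : 0 < T) (hf : Continuous f)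
    (hper : ∀ q, f (q.1 + T, q.2) = f q) (D E : ℝ) :
    ∃ S, ∀ t x y, |x| ≤ D → |y| ≤ E → |f (t, x, y)| ≤ S := by
  obtain ⟨S, hS⟩ := (isCompact_Icc.prod (isCompact_Icc.prod isCompact_Icc) :
    IsCompact (Icc 0 T ×ˢ Icc (-D) D ×ˢ Icc (-E) E)).exists_bound_of_continuousOn hf.continuousOn
  refine ⟨S, fun t x y hx hy ↦ ?_⟩
  have hshift : Periodic (fun t ↦ f (t, x, y)) T := fun t ↦ hper (t, x, y)
  obtain ⟨t', ht', htt'⟩ := hshift.exists_mem_Ico₀ hT t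
  rw [show f (t, x, y) = f (t', x, y) from htt']
  exact hS _ ⟨Ico_subset_Icc_self ht', abs_le.1 hx, abs_le.1 hy⟩

theorem exists_abs_le_mul_one_add_sq {a b δ : ℝ} (hT : 0 < T) (hf : Continuous f)
    (hper : ∀ q, f (q.1 + T, q.2) = f q) (hδ : 0 ≤ δ)
    (hgrowth : ∀ t x y, |f (t, x, y)| ≤ a + b * |y| ^ (2 - δ)) (D : ℝ) :
    ∃ C, ∀ t x y, |x| ≤ D → |f (t, x, y)| ≤ C * (1 + y ^ 2) := by
  -- If `δ > 2`, the growth bound says nothing near `y = 0`, so slopes below `1` use compactness.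
  obtain ⟨S, hS⟩ := exists_abs_le_on_strip_of_periodic hT hf hper D 1
  refine ⟨max S (|a| + |b|), fun t x y hx ↦ ?_⟩
  rcases le_total |y| 1 with hy | hy
  · have hS0 : 0 ≤ S := (abs_nonneg _).trans (hS t x y hx hy)
    calc |f (t, x, y)| ≤ max S (|a| + |b|) * 1 := by
          rw [mul_one]
          exact (hS t x y hx hy).trans (le_max_left _ _)
      _ ≤ max S (|a| + |b|) * (1 + y ^ 2) := by
          gcongr
          exact le_add_of_nonneg_right (sq_nonneg y)
  · have hpow : |y| ^ (2 - δ) ≤ y ^ 2 := by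
      rw [← sq_abs, ← Real.rpow_two]
      exact Real.rpow_le_rpow_of_exponent_le hy (sub_le_self 2 hδ)
    have hy2 : 1 ≤ y ^ 2 := (one_le_sq_iff_one_le_abs y).2 hy
    calc |f (t, x, y)| ≤ a + b * |y| ^ (2 - δ) := hgrowth t x y
      _ ≤ |a| * (1 + y ^ 2) + |b| * (1 + y ^ 2) := by
          gcongr
          · exact (le_abs_self a).trans (le_mul_of_one_le_right (abs_nonneg a) (by linarith))
          · exact le_abs_self b
          · linarith
      _ ≤ max S (|a| + |b|) * (1 + y ^ 2) := by
          rw [← add_mul]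
          gcongr
          exact le_max_right _ _

end Growth

end NagumoBarrier

open NagumoBarrier

theorem stmt_0_general (T : ℝ) (hT : 0 < T) (v : ℝ → ℝ → ℝ → ℝ)
    (hv_cont : Continuous fun p : ℝ × ℝ × ℝ => v p.1 p.2.1 p.2.2)
    (hv_per : ∀ t x y, v (t + T) x y = v t x y)
    (x₁ x₂ : ℝ → ℝ) (hx₁ : ContDiff ℝ 2 x₁) (hx₂ : ContDiff ℝ 2 x₂)
    (hx₁_per : Periodic x₁ T) (hx₂_per : Periodic x₂ T) (h_le : ∀ t, x₁ t ≤ x₂ t)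
    (C : ℝ) (hv_growth : ∀ t x y, x ∈ Icc (x₁ t) (x₂ t) → |v t x y| ≤ C * (1 + y ^ 2))
    (h_low : ∀ t, deriv (deriv x₁) t > v t (x₁ t) (deriv x₁ t))
    (h_up : ∀ t, deriv (deriv x₂) t < v t (x₂ t) (deriv x₂ t)) :
    ∃ x : ℝ → ℝ, ContDiff ℝ 2 x ∧ Periodic x T ∧
      (∀ t, deriv (deriv x) t = v t (x t) (deriv x t)) ∧ ∀ t, x₁ t < x t ∧ x t < x₂ t := by
  let f : ℝ × ℝ × ℝ → ℝ := fun q ↦ v q.1 q.2.1 q.2.2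
  have hf_per : ∀ q, f (q.1 + T, q.2) = f q := fun _ ↦ hv_per _ _ _
  have hlower : IsStrictLowerBarrier T f x₁ := ⟨hx₁, hx₁_per, h_low⟩
  have hupper : IsStrictUpperBarrier T f x₂ := ⟨hx₂, hx₂_per, h_up⟩
  obtain ⟨D₁, hD₁⟩ := exists_abs_le_of_periodic hT.ne' hx₁.continuous hx₁_per
  obtain ⟨D₂, hD₂⟩ := exists_abs_le_of_periodic hT.ne' hx₂.continuous hx₂_per
  obtain ⟨K₁, hK₁⟩ := exists_abs_le_of_periodic hT.ne' (hx₁.continuous_deriv one_le_two)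
    (periodic_deriv hx₁_per)
  obtain ⟨K₂, hK₂⟩ := exists_abs_le_of_periodic hT.ne' (hx₂.continuous_deriv one_le_two)
    (periodic_deriv hx₂_per)
  obtain ⟨K, hK⟩ : ∃ K, max (max K₁ K₂) (Real.exp (C * (D₂ - -D₁))) ≤ K := ⟨_, le_rfl⟩
  simp only [max_le_iff] at hK
  have hK0 : 0 ≤ K := (Real.exp_pos _).le.trans hK.2
  have hC0 : 0 ≤ C := nonneg_of_mul_nonneg_left
    ((abs_nonneg _).trans (hv_growth 0 (x₁ 0) 0 (left_mem_Icc.2 (h_le 0)))) (by positivity)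
  have hM0 : 0 ≤ C * (1 + K ^ 2) := by positivity
  obtain ⟨x, hx⟩ := exists_isPeriodicSolution_truncatedField hT hv_cont hf_per hx₁.continuous
    hx₂.continuous hx₁_per hx₂_per h_le hK0 (M := C * (1 + K ^ 2)) fun t x y hx hy ↦
      (hv_growth t x y hx).trans (by gcongr 2; exact sq_le_sq.2 (hy.trans (le_abs_self K)))
  have hgt := hlower.lt_of_isPeriodicSolution hT.ne' h_le (fun t ↦ (hK₁ t).trans hK.1.1) hM0 hx
  have hlt := hupper.gt_of_isPeriodicSolution hT.ne' h_le (fun t ↦ (hK₂ t).trans hK.1.2) hM0 hx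
  have hsol : IsPeriodicSolution T f x := hx.of_truncatedField hT hK0 hv_growth hK.2 hM0
    (fun t ↦ ⟨(hgt t).le, (hlt t).le⟩) fun t ↦
      ⟨(abs_le.1 (hD₁ t)).1.trans (hgt t).le, (hlt t).le.trans (abs_le.1 (hD₂ t)).2⟩
  exact ⟨x, hsol.contDiff, hsol.periodic, hsol.deriv_deriv, fun t ↦ ⟨hgt t, hlt t⟩⟩

/-- Barrier theorem for the scalar second-order ODE `x'' = v(t, x, x')` with a
Nagumo-type sub-quadratic growth condition: strict periodic lower and upper
barriers yield a `T`-periodic solution between them. -/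
theorem stmt_0
    (T : ℝ) (hT : 0 < T)
    (v : ℝ → ℝ → ℝ → ℝ)
    (hv_cont : Continuous fun p : ℝ × ℝ × ℝ => v p.1 p.2.1 p.2.2)
    (hv_per : ∀ t x y, v (t + T) x y = v t x y)
    (a b : ℝ) (ha : 0 ≤ a) (hb : 0 ≤ b) (δ : ℝ) (hδ : 0 < δ)
    (hv_growth : ∀ t x y, |v t x y| ≤ a + b * |y| ^ (2 - δ))
    (x₁ x₂ : ℝ → ℝ)
    (hx₁ : ContDiff ℝ 2 x₁) (hx₂ : ContDiff ℝ 2 x₂)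
    (hx₁_per : Function.Periodic x₁ T) (hx₂_per : Function.Periodic x₂ T)
    (h_lt : ∀ t, x₁ t < x₂ t)
    (h_low : ∀ t, deriv (deriv x₁) t > v t (x₁ t) (deriv x₁ t))
    (h_up : ∀ t, deriv (deriv x₂) t < v t (x₂ t) (deriv x₂ t)) :
    ∃ x : ℝ → ℝ, ContDiff ℝ 2 x ∧ Function.Periodic x T ∧
      (∀ t, deriv (deriv x) t = v t (x t) (deriv x t)) ∧
      (∀ t, x₁ t < x t ∧ x t < x₂ t) := by
  obtain ⟨D₁, hD₁⟩ := exists_abs_le_of_periodic hT.ne' hx₁.continuous hx₁_per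
  obtain ⟨D₂, hD₂⟩ := exists_abs_le_of_periodic hT.ne' hx₂.continuous hx₂_per
  obtain ⟨C, hC⟩ := exists_abs_le_mul_one_add_sq hT hv_cont (fun _ ↦ hv_per _ _ _) hδ.le hv_growth
    (max D₁ D₂)
  exact stmt_0_general T hT v hv_cont hv_per x₁ x₂ hx₁ hx₂ hx₁_per hx₂_per (fun t ↦ (h_lt t).le) C
    (fun t x y hx ↦ hC t x y ((abs_le_max_abs_abs hx.1 hx.2).trans (max_le_max (hD₁ t) (hD₂ t))))
    h_low h_up
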